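/- arXiv:1409.8009 — 3 statements merged into one kernel-verified Lean document; each statement's English description precedes it below -/
import Mathlib

section
/- (Strong-to-weak disorder coupling / hedgehog identities.) Let H(0) be a bounded self-adjoint operator on ℓ²(ℤ^d), let U : ℤ^d → ℝ be bounded, and let z ∈ ℂ ∖ ℝ. On ℓ²(ℤ^d) ⊕ ℓ²(ℤ^d), define the bounded self-adjoint operator H^Ш by H^Ш(ψ₁, ψ₀) = (Uψ₁ − ψ₀, −ψ₁ + H(0)ψ₀), where Uψ₁ denotes pointwise multiplication. Let U_z^# denote multiplication by the bounded function x ↦ (z − U(x))^{−1}, and let P₀, P₁ be the orthogonal projections onto the second and first summands respectively. Then: (i) H(0) + U_z^# − z is boundedly invertible and P₀ (H^Ш − z)^{−1} P₀* = (H(0) + U_z^# − z)^{−1}; (ii) −(H(0) − z)^{−1} + U − z is boundedly invertible and P₁ (H^Ш − z)^{−1} P₁* = (−(H(0) − z)^{−1} + U − z)^{−1}. -/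
open scoped Classical

noncomputable section

abbrev Site (d : ℕ) := Fin d → ℤ

abbrev l2 (d : ℕ) := lp (fun _ : Site d => ℂ) 2

/-- Coercivity of the imaginary part gives invertibility. -/
theorem isUnit_aux {E : Type*} [NormedAddCommGroup E] [InnerProductSpace ℂ E] [CompleteSpace E]
    (H K : E →L[ℂ] E) (hH : IsSelfAdjoint H) (z : ℂ) (hz : z.im ≠ 0)
    (hK : ∀ x, 0 ≤ z.im * (inner ℂ (K x) x).im) : IsUnit (H + K - z • 1) := by
  have hc : (0 : ℝ) < |z.im| := abs_pos.mpr hz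
  refine ContinuousLinearMap.isUnit_of_forall_le_norm_inner_map _ (c := ⟨|z.im|, hc.le⟩) hc ?_
  intro x
  have hs : (inner ℂ (H x) x).im = 0 := hH.isSymmetric.im_inner_apply_self x
  have him : (inner ℂ ((H + K - z • 1) x) x).im
      = (inner ℂ (K x) x).im + z.im * ‖x‖ ^ 2 := by
    have e : (H + K - z • 1) x = H x + K x - z • x := by simp
    have e2 : inner ℂ x x = (((‖x‖ ^ 2 : ℝ)) : ℂ) := by
      rw [inner_self_eq_norm_sq_to_K]; push_cast; rfl
    rw [e, inner_sub_left, inner_add_left, inner_smul_left, e2]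
    simp only [Complex.sub_im, Complex.add_im, Complex.mul_im, Complex.conj_im, Complex.conj_re,
      Complex.ofReal_re, Complex.ofReal_im, hs]
    ring
  refine le_trans ?_ (Complex.abs_im_le_norm _)
  rw [him]
  change ‖x‖ ^ 2 * |z.im| ≤ _
  have h := hK x
  have h2 : |z.im| * (‖x‖ ^ 2 * |z.im|)
      ≤ |z.im| * |(inner ℂ (K x) x).im + z.im * ‖x‖ ^ 2| := by
    rw [← abs_mul]
    refine le_trans ?_ (le_abs_self _)
    nlinarith [abs_mul_abs_self z.im]
  exact le_of_mul_le_mul_left h2 hc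

theorem unit_inv_aux {R : Type*} [Ring R] {a b : R} (h1 : a * b = 1) (h2 : b * a = 1) :
    IsUnit a ∧ Ring.inverse a = b :=
  ⟨⟨⟨a, b, h1, h2⟩, rfl⟩, Ring.inverse_unit ⟨a, b, h1, h2⟩⟩

theorem ring_aux {K : Type*} [Ring K] {A B D G R : K} (hAB : A * B = 1) (hBA : B * A = 1)
    (hDG : D * G = 1) (hGD : G * D = 1) (hSR : (D - B) * R = 1) (hRS : R * (D - B) = 1) :
    D * R = 1 + B * R ∧ R * D = 1 + R * B ∧
      IsUnit (A - G) ∧ Ring.inverse (A - G) = B + B * R * B := by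
  have hDR : D * R = 1 + B * R := by rw [← hSR]; noncomm_ring
  have hRD : R * D = 1 + R * B := by rw [← hRS]; noncomm_ring
  have hGBR : G * B * R = R - G := by
    have : G * (D * R) = R := by rw [← mul_assoc, hGD, one_mul]
    rw [hDR] at this
    rw [eq_sub_iff_add_eq]; conv_rhs => rw [← this]
    noncomm_ring
  have hRBG : R * B * G = R - G := by
    have : (R * D) * G = R := by rw [mul_assoc, hDG, mul_one]
    rw [hRD] at this
    rw [eq_sub_iff_add_eq]; conv_rhs => rw [← this]
    noncomm_ring
  refine ⟨hDR, hRD, ?_⟩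
  have hT : IsUnit (A - G) ∧ Ring.inverse (A - G) = B + B * R * B := by
    apply unit_inv_aux
    · calc (A - G) * (B + B * R * B)
          = A * B + (A * B) * R * B - G * B - (G * B * R) * B := by noncomm_ring
        _ = 1 := by rw [hAB, hGBR]; noncomm_ring
    · calc (B + B * R * B) * (A - G)
          = B * A + B * R * (B * A) - B * G - B * (R * B * G) := by noncomm_ring
        _ = 1 := by rw [hBA, hRBG]; noncomm_ring
  exact hT

set_option maxHeartbeats 1000000 in
/-- relations (6.2), strong-to-weak disorder coupling on the hedgehog
lattice: the diagonal blocks of the resolvent of `H^Ш` are resolvents of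
`H(0) + U_z^#` and of `-G_z[H(0)] + U`. -/
theorem hedgehog_coupling
    {d : ℕ} (H0 : l2 d →L[ℂ] l2 d) (hH0 : IsSelfAdjoint H0)
    (U : Site d → ℝ) (hU : ∃ M : ℝ, ∀ x, |U x| ≤ M)
    (z : ℂ) (hz : z.im ≠ 0)
    -- multiplication by U
    (MU : l2 d →L[ℂ] l2 d) (hMU : ∀ (ψ : l2 d) (x : Site d), MU ψ x = (U x : ℂ) * ψ x)
    -- multiplication by x ↦ (z - U(x))⁻¹
    (Mz : l2 d →L[ℂ] l2 d) (hMz : ∀ (ψ : l2 d) (x : Site d), Mz ψ x = ((z : ℂ) - (U x : ℂ))⁻¹ * ψ x)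
    -- the hedgehog operator H^Ш (ψ₁, ψ₀) = (U ψ₁ - ψ₀, -ψ₁ + H(0) ψ₀)
    (HSh : (l2 d × l2 d) →L[ℂ] (l2 d × l2 d))
    (hHSh : ∀ ψ : l2 d × l2 d, HSh ψ = (MU ψ.1 - ψ.2, -ψ.1 + H0 ψ.2)) :
    IsUnit (HSh - z • 1)
    ∧ IsUnit (H0 + Mz - z • 1)
    ∧ (ContinuousLinearMap.snd ℂ (l2 d) (l2 d)).comp
        ((Ring.inverse (HSh - z • 1)).comp (ContinuousLinearMap.inr ℂ (l2 d) (l2 d)))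
        = Ring.inverse (H0 + Mz - z • 1)
    ∧ IsUnit (-(Ring.inverse (H0 - z • 1)) + MU - z • 1)
    ∧ (ContinuousLinearMap.fst ℂ (l2 d) (l2 d)).comp
        ((Ring.inverse (HSh - z • 1)).comp (ContinuousLinearMap.inl ℂ (l2 d) (l2 d)))
        = Ring.inverse (-(Ring.inverse (H0 - z • 1)) + MU - z • 1) := by
  have hne : ∀ x, z - (U x : ℂ) ≠ 0 := fun x h => hz (by simpa using congrArg Complex.im h)
  have hS : IsUnit (H0 + Mz - z • 1) := by
    refine isUnit_aux H0 Mz hH0 z hz fun ψ => ?_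
    have h := (Complex.hasSum_im (lp.hasSum_inner (𝕜 := ℂ) (Mz ψ) ψ)).mul_left z.im
    refine h.nonneg fun x => ?_
    rw [hMz ψ x]
    have e : inner ℂ ((z - (U x : ℂ))⁻¹ * ψ x) (ψ x)
        = (starRingEnd ℂ) (z - (U x : ℂ))⁻¹ * ((Complex.normSq (ψ x) : ℝ) : ℂ) := by
      rw [Complex.normSq_eq_conj_mul_self]
      simp only [RCLike.inner_apply, map_mul]
      ring
    rw [e, Complex.im_mul_ofReal, Complex.conj_im, Complex.inv_im]
    have e3 : (z - (U x : ℂ)).im = z.im := by simp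
    rw [e3]
    have := Complex.normSq_nonneg (z - (U x : ℂ))
    have := Complex.normSq_nonneg (ψ x)
    have e4 : z.im * (-(-z.im / Complex.normSq (z - (U x : ℂ))) * Complex.normSq (ψ x))
      = z.im ^ 2 / Complex.normSq (z - (U x : ℂ)) * Complex.normSq (ψ x) := by ring
    rw [e4]
    positivity
  have hD : IsUnit (H0 - z • 1) := by
    have := isUnit_aux H0 0 hH0 z hz (by simp)
    simpa using this
  have hAB : (MU - z • 1) * (-Mz) = 1 := by
    ext ψ x
    have e : (((MU - z • 1) * (-Mz)) ψ) = z • Mz ψ - MU (Mz ψ) := by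
      simp [sub_eq_add_neg, add_comm]
    rw [e, lp.coeFn_sub, Pi.sub_apply, lp.coeFn_smul, Pi.smul_apply, hMU, hMz, smul_eq_mul]
    have := hne x
    change _ = ψ x
    field_simp
  have hBA : (-Mz) * (MU - z • 1) = 1 := by
    ext ψ x
    have e : (((-Mz) * (MU - z • 1)) ψ) = z • Mz ψ - Mz (MU ψ) := by
      simp [sub_eq_add_neg, add_comm]
    rw [e, lp.coeFn_sub, Pi.sub_apply, lp.coeFn_smul, Pi.smul_apply, hMz, hMz, hMU, smul_eq_mul]
    have := hne x
    change _ = ψ x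
    field_simp
  have hDG := Ring.mul_inverse_cancel _ hD
  have hGD := Ring.inverse_mul_cancel _ hD
  have hSR := Ring.mul_inverse_cancel _ hS
  have hRS := Ring.inverse_mul_cancel _ hS
  have hSdef : H0 + Mz - z • 1 = (H0 - z • 1) - (-Mz) := by abel
  have hTdef : -(Ring.inverse (H0 - z • 1)) + MU - z • 1
      = (MU - z • 1) - Ring.inverse (H0 - z • 1) := by abel
  rw [hTdef]
  set R := Ring.inverse (H0 + Mz - z • 1) with hR
  set G := Ring.inverse (H0 - z • 1) with hG
  rw [hSdef] at hSR hRS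
  obtain ⟨A, hA⟩ : ∃ A, A = MU - z • (1 : l2 d →L[ℂ] l2 d) := ⟨_, rfl⟩
  obtain ⟨D, hDd⟩ : ∃ D, D = H0 - z • (1 : l2 d →L[ℂ] l2 d) := ⟨_, rfl⟩
  obtain ⟨B, hB⟩ : ∃ B, B = -Mz := ⟨_, rfl⟩
  rw [← hA] at hAB hBA ⊢
  rw [← hDd] at hDG hGD hSR hRS
  rw [← hB] at hAB hBA hSR hRS
  clear_value R G
  obtain ⟨hDR, hRD, hT, hTi⟩ := ring_aux hAB hBA hDG hGD hSR hRS
  have pw : ∀ {X Y : l2 d →L[ℂ] l2 d}, X = Y → ∀ v, X v = Y v := fun h v => by rw [h]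
  have hL : ∀ ψ, (HSh - z • 1) ψ = (A ψ.1 - ψ.2, -ψ.1 + D ψ.2) := by
    intro ψ
    have : (HSh - z • 1) ψ = HSh ψ - z • ψ := rfl
    rw [this, hHSh, hA, hDd]
    ext1
    · change MU ψ.1 - ψ.2 - z • ψ.1 = (MU ψ.1 - z • ψ.1) - ψ.2
      abel
    · change -ψ.1 + H0 ψ.2 - z • ψ.2 = -ψ.1 + (H0 ψ.2 - z • ψ.2)
      abel
  let V : (l2 d × l2 d) →L[ℂ] (l2 d × l2 d) :=
    ((B + B * R * B).coprod (B * R)).prod ((R * B).coprod R)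
  have hV : ∀ ψ, V ψ = (B ψ.1 + B (R (B ψ.1)) + B (R ψ.2), R (B ψ.1) + R ψ.2) := fun ψ => rfl
  have pAB : ∀ v, A (B v) = v := pw hAB
  have pBA : ∀ v, B (A v) = v := pw hBA
  have pDR : ∀ v, D (R v) = v + B (R v) := pw hDR
  have pRD : ∀ v, R (D v) = v + R (B v) := pw hRD
  obtain ⟨hW, hWi⟩ : IsUnit (HSh - z • 1) ∧ Ring.inverse (HSh - z • 1) = V := by
    apply unit_inv_aux
    · refine ContinuousLinearMap.ext fun ψ => ?_
      change (HSh - z • 1) (V ψ) = ψ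
      rw [hL, hV]
      ext1
      · simp only [map_add, pAB]; abel
      · simp only [map_add, pDR]; abel
    · refine ContinuousLinearMap.ext fun ψ => ?_
      change V ((HSh - z • 1) ψ) = ψ
      rw [hL, hV]
      ext1
      · simp only [map_add, map_sub, map_neg, pBA, pRD]; abel
      · simp only [map_add, map_sub, map_neg, pBA, pRD]; abel
  refine ⟨hW, hS, ?_, hT, ?_⟩
  · rw [hWi]
    refine ContinuousLinearMap.ext fun v => ?_
    change (V (0, v)).2 = R v
    rw [hV]; simp
  · rw [hWi, hTi]
    refine ContinuousLinearMap.ext fun v => ?_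
    change (V (v, 0)).1 = B v + B (R (B v))
    rw [hV]; simp

end
end

section
/- (Decoupling lemma.) Let μ be a probability measure on ℝ which is α-regular for some α > 0 (there is C₀ ≥ 0 with μ([t−ε,t+ε]) ≤ C₀ε^α for all t ∈ ℝ, ε > 0) and which has finite q-moment M_q = ∫|t|^q dμ(t) < ∞ for some q > 0. Let l, m be nonnegative integers and s, r > 0 satisfy rm < α and q ≥ (sl + rm)·α/(α − rm). Then there exist constants C, C′ > 0, depending only on μ, l, m, s, r, such that for all a₁, …, a_l, b₁, …, b_m ∈ ℂ, writing I = ∫ (∏_{j=1}^l |v − a_j|^s) / (∏_{i=1}^m |v − b_i|^r) dμ(v) and R = (∏_{j=1}^l (1+|a_j|)^s) / (∏_{i=1}^m (1+|b_i|)^r), one has I ≤ C·R and R ≤ C′·I. -/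
open MeasureTheory
open scoped ENNReal NNReal

noncomputable section

lemma dec_meas (b : ℂ) : Measurable (fun v : ℝ => ‖(v : ℂ) - b‖) := by fun_prop

lemma dec_ball (μ : Measure ℝ) (α C₀ : ℝ)
    (hreg : ∀ t ε : ℝ, 0 < ε → μ (Set.Icc (t - ε) (t + ε)) ≤ ENNReal.ofReal (C₀ * ε ^ α))
    (b : ℂ) (ε : ℝ) (hε : 0 < ε) :
    μ {v : ℝ | ‖(v : ℂ) - b‖ ≤ ε} ≤ ENNReal.ofReal (C₀ * ε ^ α) := by
  refine le_trans (measure_mono ?_) (hreg b.re ε hε)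
  intro v hv
  have h1 := Complex.abs_re_le_norm ((v : ℂ) - b)
  simp only [Complex.sub_re, Complex.ofReal_re] at h1
  have h2 := abs_le.1 (h1.trans hv)
  constructor <;> linarith [h2.1, h2.2]

lemma dec_ne (μ : Measure ℝ) (α : ℝ) (hα : 0 < α) (C₀ : ℝ)
    (hreg : ∀ t ε : ℝ, 0 < ε → μ (Set.Icc (t - ε) (t + ε)) ≤ ENNReal.ofReal (C₀ * ε ^ α))
    (b : ℂ) : ∀ᵐ v : ℝ ∂μ, 0 < ‖(v : ℂ) - b‖ := by
  rw [ae_iff]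
  have hlim : Filter.Tendsto (fun ε : ℝ => ENNReal.ofReal (C₀ * ε ^ α))
      (nhdsWithin 0 (Set.Ioi 0)) (nhds 0) := by
    have h : ContinuousAt (fun ε : ℝ => ENNReal.ofReal (C₀ * ε ^ α)) 0 := by
      apply ENNReal.continuous_ofReal.continuousAt.comp
      exact continuousAt_const.mul (Real.continuousAt_rpow_const _ _ (Or.inr hα.le))
    have h2 := h.tendsto
    simp only [Real.zero_rpow hα.ne', mul_zero, ENNReal.ofReal_zero] at h2
    exact h2.mono_left nhdsWithin_le_nhds
  refine le_antisymm (ge_of_tendsto hlim ?_) zero_le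
  filter_upwards [self_mem_nhdsWithin] with ε hε
  refine le_trans (measure_mono ?_) (dec_ball μ α C₀ hreg b ε hε)
  intro v hv
  simp only [Set.mem_ofPred_eq, not_lt] at hv ⊢
  exact hv.trans (le_of_lt hε)

lemma dec_sing (μ : Measure ℝ) (α : ℝ) (hα : 0 < α) (C₀ : ℝ) (hC₀ : 0 ≤ C₀)
    (hreg : ∀ t ε : ℝ, 0 < ε → μ (Set.Icc (t - ε) (t + ε)) ≤ ENNReal.ofReal (C₀ * ε ^ α))
    (ρ : ℝ) (hρ : 0 ≤ ρ) (hρα : ρ < α) :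
    ∃ K : ℝ, 0 ≤ K ∧ ∀ (b : ℂ) (ε : ℝ), 0 < ε →
      ∫⁻ v : ℝ, {v : ℝ | ‖(v : ℂ) - b‖ ≤ ε}.indicator
        (fun v => ENNReal.ofReal (‖(v : ℂ) - b‖ ^ (-ρ))) v ∂μ ≤ ENNReal.ofReal (K * ε ^ (α - ρ)) := by
  set g : ℝ := (1 / 2 : ℝ) ^ (α - ρ) with hg
  have hg0 : 0 ≤ g := by positivity
  have hg1 : g < 1 := Real.rpow_lt_one (by norm_num) (by norm_num) (by linarith)
  refine ⟨C₀ * 2 ^ ρ * (1 - g)⁻¹, by have : 0 ≤ (1 - g)⁻¹ := inv_nonneg.2 (by linarith)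
                                     positivity, ?_⟩
  intro b ε hε
  have hpt : ∀ᵐ v : ℝ ∂μ, {v : ℝ | ‖(v : ℂ) - b‖ ≤ ε}.indicator
        (fun v => ENNReal.ofReal (‖(v : ℂ) - b‖ ^ (-ρ))) v ≤
      ∑' n : ℕ, {v : ℝ | ‖(v : ℂ) - b‖ ≤ (1 / 2) ^ n * ε}.indicator
        (fun _ => ENNReal.ofReal (((1 / 2) ^ (n + 1) * ε) ^ (-ρ))) v := by
    filter_upwards [dec_ne μ α hα C₀ hreg b] with v hv
    by_cases hx : ‖(v : ℂ) - b‖ ≤ ε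
    · obtain ⟨n, hn1, hn2⟩ := exists_nat_pow_near_of_lt_one (x := ‖(v : ℂ) - b‖ / ε)
        (y := (1 / 2 : ℝ)) (by positivity) ((div_le_one hε).2 hx) (by norm_num) (by norm_num)
      rw [lt_div_iff₀ hε] at hn1
      rw [div_le_iff₀ hε] at hn2
      refine le_trans ?_ (ENNReal.le_tsum n)
      rw [Set.indicator_of_mem (by exact hx), Set.indicator_of_mem (by exact hn2)]
      apply ENNReal.ofReal_le_ofReal
      exact Real.rpow_le_rpow_of_nonpos (by positivity) hn1.le (by linarith)
    · rw [Set.indicator_of_notMem (by exact hx)]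
      exact zero_le
  refine (lintegral_mono_ae hpt).trans ?_
  have hms : ∀ t : ℝ, MeasurableSet {v : ℝ | ‖(v : ℂ) - b‖ ≤ t} := fun t =>
    measurableSet_le (dec_meas b) measurable_const
  rw [lintegral_tsum (fun n => (measurable_const.indicator (hms _)).aemeasurable)]
  have hterm : ∀ n : ℕ, ∫⁻ v : ℝ, {v : ℝ | ‖(v : ℂ) - b‖ ≤ (1 / 2) ^ n * ε}.indicator
        (fun _ => ENNReal.ofReal (((1 / 2) ^ (n + 1) * ε) ^ (-ρ))) v ∂μ ≤
        ENNReal.ofReal (C₀ * 2 ^ ρ * ε ^ (α - ρ) * g ^ n) := by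
    intro n
    rw [lintegral_indicator_const (hms _)]
    refine (mul_le_mul_right (dec_ball μ α C₀ hreg b _ (by positivity)) _).trans ?_
    rw [← ENNReal.ofReal_mul (by positivity)]
    apply ENNReal.ofReal_le_ofReal
    apply le_of_eq
    have e1 : ((1 / 2 : ℝ) ^ (n + 1) * ε) ^ (-ρ) = 2 ^ ρ * ((1 / 2 : ℝ) ^ n * ε) ^ (-ρ) := by
      rw [pow_succ, mul_assoc, mul_left_comm, Real.mul_rpow (by norm_num) (by positivity)]
      congr 1
      rw [one_div, Real.inv_rpow (by norm_num), Real.rpow_neg (by norm_num), inv_inv]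
    have e2 : g ^ n = ((1 / 2 : ℝ) ^ n) ^ (α - ρ) := by
      rw [hg, ← Real.rpow_natCast, ← Real.rpow_mul (by norm_num), ← Real.rpow_natCast,
        ← Real.rpow_mul (by norm_num), mul_comm]
    have e3 : ((1 / 2 : ℝ) ^ n * ε) ^ (-ρ) * ((1 / 2 : ℝ) ^ n * ε) ^ α
        = ε ^ (α - ρ) * g ^ n := by
      rw [e2, ← Real.rpow_add (by positivity), mul_comm (ε ^ _), ← Real.mul_rpow (by positivity) hε.le]
      congr 1; ring
    rw [e1]
    linear_combination (C₀ * 2 ^ ρ) * e3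
  refine (ENNReal.tsum_le_tsum hterm).trans ?_
  rw [← ENNReal.ofReal_tsum_of_nonneg (fun n => by positivity)
    ((summable_geometric_of_lt_one hg0 hg1).mul_left _), tsum_mul_left,
    tsum_geometric_of_lt_one hg0 hg1]
  apply ENNReal.ofReal_le_ofReal
  apply le_of_eq; ring

lemma dec_moment (μ : Measure ℝ) [IsProbabilityMeasure μ] (q : ℝ) (hq : 0 < q)
    (hM : ∫⁻ t : ℝ, ENNReal.ofReal (|t| ^ q) ∂μ < ⊤) :
    ∃ M : ℝ, 0 < M ∧ ∫⁻ t : ℝ, ENNReal.ofReal ((1 + |t|) ^ q) ∂μ ≤ ENNReal.ofReal M := by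
  set A := ∫⁻ t : ℝ, ENNReal.ofReal (|t| ^ q) ∂μ with hA
  have h : ∫⁻ t : ℝ, ENNReal.ofReal ((1 + |t|) ^ q) ∂μ ≤ ENNReal.ofReal (2 ^ q) * (1 + A) := by
    have : ∀ t : ℝ, ENNReal.ofReal ((1 + |t|) ^ q) ≤
        ENNReal.ofReal (2 ^ q) * (1 + ENNReal.ofReal (|t| ^ q)) := by
      intro t
      rw [← ENNReal.ofReal_one, ← ENNReal.ofReal_add (by norm_num) (by positivity),
        ← ENNReal.ofReal_mul (by positivity)]
      apply ENNReal.ofReal_le_ofReal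
      rcases le_total |t| 1 with h | h
      · calc (1 + |t|) ^ q ≤ 2 ^ q := Real.rpow_le_rpow (by positivity) (by linarith) hq.le
          _ = 2 ^ q * 1 := by ring
          _ ≤ _ := by gcongr; linarith [Real.rpow_nonneg (abs_nonneg t) q]
      · calc (1 + |t|) ^ q ≤ (2 * |t|) ^ q := Real.rpow_le_rpow (by positivity) (by linarith) hq.le
          _ = 2 ^ q * |t| ^ q := Real.mul_rpow (by norm_num) (by positivity)
          _ ≤ _ := by gcongr; linarith
    refine (lintegral_mono this).trans ?_
    rw [lintegral_const_mul _ (by fun_prop), lintegral_add_left (by fun_prop)]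
    simp [hA]
  refine ⟨(ENNReal.ofReal (2 ^ q) * (1 + A)).toReal + 1, by positivity, h.trans ?_⟩
  refine le_trans (le_of_eq ?_) (ENNReal.ofReal_le_ofReal (le_add_of_nonneg_right zero_le_one))
  rw [ENNReal.ofReal_toReal]
  exact ENNReal.mul_ne_top ENNReal.ofReal_ne_top (by simp [hM.ne])

lemma dec_key (μ : Measure ℝ) [IsProbabilityMeasure μ] (α : ℝ) (hα : 0 < α)
    (C₀ : ℝ) (hC₀ : 0 ≤ C₀)
    (hreg : ∀ t ε : ℝ, 0 < ε → μ (Set.Icc (t - ε) (t + ε)) ≤ ENNReal.ofReal (C₀ * ε ^ α))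
    (q : ℝ) (hq : 0 < q)
    (hM : ∫⁻ t : ℝ, ENNReal.ofReal (|t| ^ q) ∂μ < ⊤)
    (ρ : ℝ) (hρ : 0 ≤ ρ) (hρα : ρ < α) (k : ℝ) (hk : 0 ≤ k)
    (hqc : k * α / (α - ρ) ≤ q) :
    ∃ K : ℝ, 0 < K ∧ ∀ b : ℂ,
      ∫⁻ v : ℝ, ENNReal.ofReal ((1 + |v|) ^ k * max 1 (‖(v : ℂ) - b‖ ^ (-ρ))) ∂μ
        ≤ ENNReal.ofReal K := by
  obtain ⟨K₁, hK₁, hsing⟩ := dec_sing μ α hα C₀ hC₀ hreg ρ hρ hρα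
  obtain ⟨M, hM0, hMM⟩ := dec_moment μ q hq hM
  have hαρ : 0 < α - ρ := by linarith
  have hk2 : k ≤ q * (α - ρ) / α := by
    rw [div_le_iff₀ hαρ] at hqc
    rw [le_div_iff₀ hα]; exact hqc
  have hkq : k ≤ q := by
    refine hk2.trans ?_
    rw [div_le_iff₀ hα]
    nlinarith
  refine ⟨M + 3 ^ q * M + K₁, by positivity, ?_⟩
  intro b
  set B : ℝ := 2 + ‖b‖ with hB
  have hB1 : 1 ≤ B := by have := norm_nonneg b; linarith
  have hB0 : 0 < B := by linarith
  set ε : ℝ := B ^ (-(q / α)) with hε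
  have hε0 : 0 < ε := by positivity
  have hms : ∀ t : ℝ, MeasurableSet {v : ℝ | ‖(v : ℂ) - b‖ ≤ t} := fun t =>
    measurableSet_le (dec_meas b) measurable_const
  have htri : ∀ v : ℝ, |v| ≤ ‖(v : ℂ) - b‖ + ‖b‖ := by
    intro v
    have := norm_add_le ((v : ℂ) - b) b
    simpa using this
  have htri2 : ∀ v : ℝ, ‖b‖ ≤ ‖(v : ℂ) - b‖ + |v| := by
    intro v
    have := norm_sub_le (v : ℂ) ((v : ℂ) - b)
    simp at this
    linarith
  -- mass of the unit ball
  have hmass : μ {v : ℝ | ‖(v : ℂ) - b‖ ≤ 1} ≤ ENNReal.ofReal (3 ^ q * M * B ^ (-q)) := by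
    have h1 : ENNReal.ofReal ((B / 3) ^ q) * μ {v : ℝ | ‖(v : ℂ) - b‖ ≤ 1} ≤ ENNReal.ofReal M := by
      rw [← lintegral_indicator_const (hms 1)]
      refine (lintegral_mono ?_).trans hMM
      intro v
      by_cases hv : ‖(v : ℂ) - b‖ ≤ 1
      · rw [Set.indicator_of_mem (by exact hv)]
        apply ENNReal.ofReal_le_ofReal
        apply Real.rpow_le_rpow (by positivity) _ hq.le
        have := htri2 v
        have := abs_nonneg v
        rw [div_le_iff₀ (by norm_num)]
        linarith
      · rw [Set.indicator_of_notMem (by exact hv)]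
        exact zero_le
    have h2 : 3 ^ q * M * B ^ (-q) = M / (B / 3) ^ q := by
      rw [Real.div_rpow hB0.le (by norm_num), Real.rpow_neg hB0.le]
      field_simp
    rw [h2, ENNReal.ofReal_div_of_pos (by positivity)]
    rw [ENNReal.le_div_iff_mul_le (Or.inl (by simp; positivity)) (Or.inl ENNReal.ofReal_ne_top), mul_comm]
    exact h1
  set F1 : ℝ → ℝ≥0∞ := fun v => ENNReal.ofReal ((1 + |v|) ^ q) with hF1
  set F2 : ℝ → ℝ≥0∞ := {v : ℝ | ‖(v : ℂ) - b‖ ≤ 1}.indicator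
    (fun _ => ENNReal.ofReal (B ^ k * ε ^ (-ρ))) with hF2
  set F3 : ℝ → ℝ≥0∞ := fun v => ENNReal.ofReal (B ^ k) * {v : ℝ | ‖(v : ℂ) - b‖ ≤ ε}.indicator
    (fun v => ENNReal.ofReal (‖(v : ℂ) - b‖ ^ (-ρ))) v with hF3
  have hε1 : ε ≤ 1 := by
    apply Real.rpow_le_one_of_one_le_of_nonpos hB1
    have : 0 < q / α := by positivity
    linarith
  have hpt : ∀ v : ℝ, ENNReal.ofReal ((1 + |v|) ^ k * max 1 (‖(v : ℂ) - b‖ ^ (-ρ))) ≤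
      F1 v + F2 v + F3 v := by
    intro v
    have hone : (1:ℝ) ≤ 1 + |v| := by linarith [abs_nonneg v]
    rcases le_total (‖(v : ℂ) - b‖ ^ (-ρ)) 1 with h1 | h1
    · rw [max_eq_left h1, mul_one]
      refine le_trans ?_ (le_trans le_self_add le_self_add)
      exact ENNReal.ofReal_le_ofReal (Real.rpow_le_rpow_of_exponent_le hone hkq)
    rw [max_eq_right h1]
    by_cases hv1 : ‖(v : ℂ) - b‖ ≤ 1
    · have hvk : (1 + |v|) ^ k ≤ B ^ k :=
        Real.rpow_le_rpow (by positivity) (by linarith [htri v]) hk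
      by_cases hv : ‖(v : ℂ) - b‖ ≤ ε
      · refine le_trans ?_ le_add_self
        simp only [hF3]
        rw [Set.indicator_of_mem (by exact hv), ← ENNReal.ofReal_mul (by positivity)]
        apply ENNReal.ofReal_le_ofReal
        gcongr
      · refine le_trans ?_ (le_trans le_add_self le_self_add)
        simp only [hF2]
        rw [Set.indicator_of_mem (by exact hv1)]
        apply ENNReal.ofReal_le_ofReal
        have : ‖(v : ℂ) - b‖ ^ (-ρ) ≤ ε ^ (-ρ) :=
          Real.rpow_le_rpow_of_nonpos hε0 (not_le.1 hv).le (by linarith)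
        gcongr
    · refine le_trans ?_ (le_trans le_self_add le_self_add)
      apply ENNReal.ofReal_le_ofReal
      have h2 : ‖(v : ℂ) - b‖ ^ (-ρ) ≤ 1 :=
        Real.rpow_le_one_of_one_le_of_nonpos (not_le.1 hv1).le (by linarith)
      calc (1 + |v|) ^ k * ‖(v : ℂ) - b‖ ^ (-ρ) ≤ (1 + |v|) ^ k * 1 := by gcongr
        _ = (1 + |v|) ^ k := by ring
        _ ≤ _ := Real.rpow_le_rpow_of_exponent_le hone hkq
  have hF1m : Measurable F1 := by fun_prop
  have hF2m : Measurable F2 := measurable_const.indicator (hms _)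
  refine (lintegral_mono hpt).trans ?_
  rw [lintegral_add_left (show Measurable (fun v => F1 v + F2 v) from hF1m.add hF2m), lintegral_add_left hF1m,
    ENNReal.ofReal_add (by positivity) hK₁, ENNReal.ofReal_add (by positivity) (by positivity)]
  have hexp : k - q * (α - ρ) / α ≤ 0 := by linarith
  refine add_le_add (add_le_add hMM ?_) ?_
  · rw [hF2, lintegral_indicator_const (hms 1)]
    refine (mul_le_mul_right hmass _).trans ?_
    rw [← ENNReal.ofReal_mul (by positivity)]
    apply ENNReal.ofReal_le_ofReal
    have e : B ^ k * ε ^ (-ρ) * (3 ^ q * M * B ^ (-q)) =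
        3 ^ q * M * B ^ (k - q * (α - ρ) / α) := by
      have : B ^ (k - q * (α - ρ) / α) = B ^ k * ε ^ (-ρ) * B ^ (-q) := by
        rw [hε, ← Real.rpow_mul hB0.le, ← Real.rpow_add hB0, ← Real.rpow_add hB0]
        congr 1; field_simp; ring
      rw [this]; ring
    rw [e]
    exact mul_le_of_le_one_right (by positivity)
      (Real.rpow_le_one_of_one_le_of_nonpos hB1 hexp)
  · rw [hF3, lintegral_const_mul' _ _ ENNReal.ofReal_ne_top]
    refine (mul_le_mul_right (hsing b ε hε0) _).trans ?_
    rw [← ENNReal.ofReal_mul (by positivity)]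
    apply ENNReal.ofReal_le_ofReal
    have e : B ^ k * (K₁ * ε ^ (α - ρ)) = K₁ * B ^ (k - q * (α - ρ) / α) := by
      have : B ^ (k - q * (α - ρ) / α) = B ^ k * ε ^ (α - ρ) := by
        rw [hε, ← Real.rpow_mul hB0.le, ← Real.rpow_add hB0]
        congr 1; field_simp; ring
      rw [this]; ring
    rw [e]
    exact mul_le_of_le_one_right hK₁
      (Real.rpow_le_one_of_one_le_of_nonpos hB1 hexp)

lemma dec_conv {l m : ℕ} (s r : ℝ) (a : Fin l → ℂ) (b : Fin m → ℂ) (hs : 0 < s) (v : ℝ)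
    (hb : ∀ i, 0 < ‖(v : ℂ) - b i‖) :
    (∏ j, (‖(v : ℂ) - a j‖₊ : ℝ≥0∞) ^ s) * ∏ i, (‖(v : ℂ) - b i‖₊ : ℝ≥0∞) ^ (-r)
      = ENNReal.ofReal ((∏ j, ‖(v : ℂ) - a j‖ ^ s) * ∏ i, ‖(v : ℂ) - b i‖ ^ (-r)) := by
  rw [ENNReal.ofReal_mul (by positivity), ENNReal.ofReal_prod_of_nonneg (fun _ _ => by positivity),
    ENNReal.ofReal_prod_of_nonneg (fun _ _ => by positivity)]
  congr 1
  · refine Finset.prod_congr rfl fun j _ => ?_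
    rw [← ENNReal.ofReal_rpow_of_nonneg (norm_nonneg _) hs.le, ofReal_norm,
      enorm_eq_nnnorm]
  · refine Finset.prod_congr rfl fun j _ => ?_
    rw [← ENNReal.ofReal_rpow_of_pos (hb j), ofReal_norm, enorm_eq_nnnorm]

lemma dec_convR {l m : ℕ} (s r : ℝ) (a : Fin l → ℂ) (b : Fin m → ℂ) :
    (∏ j, ENNReal.ofReal ((1 + ‖a j‖) ^ s)) * ∏ i, ENNReal.ofReal ((1 + ‖b i‖) ^ (-r))
      = ENNReal.ofReal ((∏ j, (1 + ‖a j‖) ^ s) * ∏ i, (1 + ‖b i‖) ^ (-r)) := by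
  rw [ENNReal.ofReal_mul (by positivity), ENNReal.ofReal_prod_of_nonneg (fun _ _ => by positivity),
    ENNReal.ofReal_prod_of_nonneg (fun _ _ => by positivity)]

lemma dec_amgm {m : ℕ} (y : Fin m → ℝ) (hy : ∀ i, 0 ≤ y i) :
    ∏ i, y i ≤ 1 + ∑ i, y i ^ m := by
  rcases Nat.eq_zero_or_pos m with rfl | hm
  · simp
  · have : Nonempty (Fin m) := ⟨⟨0, hm⟩⟩
    obtain ⟨i₀, _, hi₀⟩ := Finset.exists_max_image Finset.univ y Finset.univ_nonempty
    calc ∏ i, y i ≤ ∏ _i : Fin m, y i₀ :=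
          Finset.prod_le_prod (fun i _ => hy i) (fun i hi => hi₀ i hi)
      _ = y i₀ ^ m := by simp
      _ ≤ ∑ i, y i ^ m :=
          Finset.single_le_sum (f := fun i => y i ^ m) (fun i _ => pow_nonneg (hy i) m) (Finset.mem_univ i₀)
      _ ≤ _ := by linarith

lemma dec_max (x r : ℝ) (hx : 0 < x) (m : ℕ) :
    (max 1 (x ^ (-r))) ^ m ≤ max 1 (x ^ (-(r * m))) := by
  rcases le_total (x ^ (-r)) 1 with h | h
  · rw [max_eq_left h]; simp
  · rw [max_eq_right h, ← Real.rpow_natCast, ← Real.rpow_mul hx.le]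
    refine le_trans (le_of_eq ?_) (le_max_right _ _)
    congr 1; ring

lemma dec_dist (v : ℝ) (z : ℂ) : ‖(v : ℂ) - z‖ ≤ (1 + |v|) * (1 + ‖z‖) := by
  have h := norm_sub_le (v : ℂ) z
  rw [Complex.norm_real, Real.norm_eq_abs] at h
  nlinarith [mul_nonneg (abs_nonneg v) (norm_nonneg z)]

lemma dec_factor (v r : ℝ) (hr : 0 < r) (z : ℂ) (hz : 0 < ‖(v : ℂ) - z‖) :
    ‖(v : ℂ) - z‖ ^ (-r) ≤
      (2 ^ r * (1 + |v|) ^ r) * max 1 (‖(v : ℂ) - z‖ ^ (-r)) * (1 + ‖z‖) ^ (-r) := by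
  set x := ‖(v : ℂ) - z‖ with hx
  have htri : ‖z‖ ≤ x + |v| := by
    have := norm_sub_le (v : ℂ) ((v : ℂ) - z)
    simp at this
    linarith
  have hv := abs_nonneg v
  have hzn := norm_nonneg z
  have key : (1 + ‖z‖) ^ r * x ^ (-r) ≤ 2 ^ r * (1 + |v|) ^ r * max 1 (x ^ (-r)) := by
    rcases le_total x 1 with h | h
    · have h1 : (1 + ‖z‖) ^ r ≤ (2 * (1 + |v|)) ^ r :=
        Real.rpow_le_rpow (by positivity) (by linarith) hr.le
      rw [Real.mul_rpow (by norm_num) (by positivity)] at h1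
      exact mul_le_mul h1 (le_max_right _ _) (by positivity) (by positivity)
    · have h1 : (1 + ‖z‖) ^ r ≤ (2 * (1 + |v|) * x) ^ r :=
        Real.rpow_le_rpow (by positivity) (by nlinarith) hr.le
      rw [Real.mul_rpow (by positivity) (by positivity),
        Real.mul_rpow (by norm_num) (by positivity)] at h1
      calc (1 + ‖z‖) ^ r * x ^ (-r) ≤ (2 ^ r * (1 + |v|) ^ r * x ^ r) * x ^ (-r) := by gcongr
        _ = 2 ^ r * (1 + |v|) ^ r * 1 := by
            rw [mul_assoc, ← Real.rpow_add hz]; simp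
        _ ≤ _ := by gcongr; exact le_max_left _ _
  have e : x ^ (-r) = ((1 + ‖z‖) ^ r * x ^ (-r)) * (1 + ‖z‖) ^ (-r) := by
    have : (1 + ‖z‖) ^ r * (1 + ‖z‖) ^ (-r) = 1 := by
      rw [← Real.rpow_add (by positivity)]; simp
    linear_combination (-x ^ (-r)) * this
  calc x ^ (-r) = ((1 + ‖z‖) ^ r * x ^ (-r)) * (1 + ‖z‖) ^ (-r) := e
    _ ≤ _ := by gcongr

lemma dec_pt_upper {l m : ℕ} (s r : ℝ) (hs : 0 < s) (hr : 0 < r) (a : Fin l → ℂ) (b : Fin m → ℂ)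
    (v : ℝ) (hb : ∀ i, 0 < ‖(v : ℂ) - b i‖) :
    (∏ j, ‖(v : ℂ) - a j‖ ^ s) * ∏ i, ‖(v : ℂ) - b i‖ ^ (-r) ≤
      ((2 ^ r) ^ m * ((∏ j, (1 + ‖a j‖) ^ s) * ∏ i, (1 + ‖b i‖) ^ (-r))) *
        ((1 + |v|) ^ (s * l + r * m) * max 1 (‖(v : ℂ) - 0‖ ^ (-(r * m))) +
          ∑ i, (1 + |v|) ^ (s * l + r * m) * max 1 (‖(v : ℂ) - b i‖ ^ (-(r * m)))) := by
  have hv := abs_nonneg v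
  have h1 : ∏ j, ‖(v : ℂ) - a j‖ ^ s ≤ ((1 + |v|) ^ s) ^ l * ∏ j, (1 + ‖a j‖) ^ s := by
    calc ∏ j, ‖(v : ℂ) - a j‖ ^ s ≤ ∏ j, ((1 + |v|) ^ s * (1 + ‖a j‖) ^ s) := by
          refine Finset.prod_le_prod (fun _ _ => by positivity) fun j _ => ?_
          rw [← Real.mul_rpow (by positivity) (by positivity)]
          exact Real.rpow_le_rpow (norm_nonneg _) (dec_dist v _) hs.le
      _ = _ := by rw [Finset.prod_mul_distrib]; simp
  have h2 : ∏ i, ‖(v : ℂ) - b i‖ ^ (-r) ≤ (2 ^ r * (1 + |v|) ^ r) ^ m *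
      (∏ i, max 1 (‖(v : ℂ) - b i‖ ^ (-r))) * ∏ i, (1 + ‖b i‖) ^ (-r) := by
    calc ∏ i, ‖(v : ℂ) - b i‖ ^ (-r) ≤ ∏ i, ((2 ^ r * (1 + |v|) ^ r) *
            max 1 (‖(v : ℂ) - b i‖ ^ (-r)) * (1 + ‖b i‖) ^ (-r)) :=
          Finset.prod_le_prod (fun _ _ => by positivity) fun i _ => dec_factor v r hr _ (hb i)
      _ = _ := by rw [Finset.prod_mul_distrib, Finset.prod_mul_distrib]; simp
  have h3 : ∏ i, max 1 (‖(v : ℂ) - b i‖ ^ (-r)) ≤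
      max 1 (‖(v : ℂ) - 0‖ ^ (-(r * m))) + ∑ i, max 1 (‖(v : ℂ) - b i‖ ^ (-(r * m))) := by
    refine (dec_amgm _ (fun i => by positivity)).trans ?_
    exact add_le_add (le_max_left _ _) (Finset.sum_le_sum fun i _ => dec_max _ _ (hb i) m)
  have e : (1 + |v|) ^ (s * l + r * m) = ((1 + |v|) ^ s) ^ l * ((1 + |v|) ^ r) ^ m := by
    rw [Real.rpow_add (by positivity), Real.rpow_mul (by positivity), Real.rpow_mul (by positivity),
      Real.rpow_natCast, Real.rpow_natCast]
  rw [← Finset.mul_sum, ← mul_add]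
  calc _ ≤ (((1 + |v|) ^ s) ^ l * ∏ j, (1 + ‖a j‖) ^ s) * ((2 ^ r * (1 + |v|) ^ r) ^ m *
      (max 1 (‖(v : ℂ) - 0‖ ^ (-(r * m))) + ∑ i, max 1 (‖(v : ℂ) - b i‖ ^ (-(r * m))))
        * ∏ i, (1 + ‖b i‖) ^ (-r)) := by
        refine mul_le_mul h1 (h2.trans ?_) (by positivity) (by positivity)
        gcongr
    _ = _ := by rw [e, mul_pow]; ring

lemma dec_pt_lower {l m : ℕ} (s r : ℝ) (hs : 0 < s) (hr : 0 < r) (a : Fin l → ℂ) (b : Fin m → ℂ)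
    (v T δ : ℝ) (hδ : 0 < δ) (hb : ∀ i, 0 < ‖(v : ℂ) - b i‖) (hvT : |v| ≤ T)
    (ha : ∀ j, δ * (1 + ‖a j‖) ≤ ‖(v : ℂ) - a j‖) :
    ((δ ^ s) ^ l * ((1 + T) ^ (-r)) ^ m) *
      ((∏ j, (1 + ‖a j‖) ^ s) * ∏ i, (1 + ‖b i‖) ^ (-r)) ≤
    (∏ j, ‖(v : ℂ) - a j‖ ^ s) * ∏ i, ‖(v : ℂ) - b i‖ ^ (-r) := by
  have hT : 0 ≤ T := (abs_nonneg v).trans hvT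
  have h1 : (δ ^ s) ^ l * ∏ j, (1 + ‖a j‖) ^ s ≤ ∏ j, ‖(v : ℂ) - a j‖ ^ s := by
    calc (δ ^ s) ^ l * ∏ j, (1 + ‖a j‖) ^ s = ∏ j, (δ ^ s * (1 + ‖a j‖) ^ s) := by
          rw [Finset.prod_mul_distrib]; simp
      _ ≤ _ := by
          refine Finset.prod_le_prod (fun _ _ => by positivity) fun j _ => ?_
          rw [← Real.mul_rpow (by positivity) (by positivity)]
          exact Real.rpow_le_rpow (by positivity) (ha j) hs.le
  have h2 : ((1 + T) ^ (-r)) ^ m * ∏ i, (1 + ‖b i‖) ^ (-r) ≤ ∏ i, ‖(v : ℂ) - b i‖ ^ (-r) := by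
    calc ((1 + T) ^ (-r)) ^ m * ∏ i, (1 + ‖b i‖) ^ (-r)
          = ∏ i, ((1 + T) ^ (-r) * (1 + ‖b i‖) ^ (-r)) := by
          rw [Finset.prod_mul_distrib]; simp
      _ ≤ _ := by
          refine Finset.prod_le_prod (fun _ _ => by positivity) fun i _ => ?_
          rw [← Real.mul_rpow (by positivity) (by positivity)]
          refine Real.rpow_le_rpow_of_nonpos (hb i) ((dec_dist v _).trans ?_) (by linarith)
          gcongr
  calc _ = ((δ ^ s) ^ l * ∏ j, (1 + ‖a j‖) ^ s) *
        (((1 + T) ^ (-r)) ^ m * ∏ i, (1 + ‖b i‖) ^ (-r)) := by ring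
    _ ≤ _ := mul_le_mul h1 h2 (by positivity) (by positivity)

lemma dec_good (μ : Measure ℝ) [IsProbabilityMeasure μ] (α : ℝ) (hα : 0 < α)
    (C₀ : ℝ) (hC₀ : 0 ≤ C₀)
    (hreg : ∀ t ε : ℝ, 0 < ε → μ (Set.Icc (t - ε) (t + ε)) ≤ ENNReal.ofReal (C₀ * ε ^ α))
    (q : ℝ) (hq : 0 < q)
    (hM : ∫⁻ t : ℝ, ENNReal.ofReal (|t| ^ q) ∂μ < ⊤) (l : ℕ) :
    ∃ T δ : ℝ, 0 < T ∧ 0 < δ ∧ ∀ a : Fin l → ℂ,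
      ENNReal.ofReal (1 / 2) ≤ μ {v : ℝ | |v| ≤ T ∧ ∀ j, δ * (1 + ‖a j‖) ≤ ‖(v : ℂ) - a j‖} := by
  obtain ⟨M, hM0, hMM⟩ := dec_moment μ q hq hM
  set T : ℝ := (4 * M) ^ (1 / q) with hT
  have hT0 : 0 < T := by positivity
  have hTq : T ^ q = 4 * M := by
    rw [hT, ← Real.rpow_mul (by positivity)]
    simp [hq.ne']
  set η : ℝ := (1 / (4 * (l + 1) * (C₀ + 1))) ^ (1 / α) with hη
  have hη0 : 0 < η := by positivity
  have hηα : C₀ * η ^ α ≤ 1 / (4 * (l + 1)) := by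
    rw [hη, ← Real.rpow_mul (by positivity), one_div_mul_cancel hα.ne', Real.rpow_one]
    rw [mul_one_div, div_le_div_iff₀ (by positivity) (by positivity)]
    have : (0:ℝ) ≤ l := by positivity
    nlinarith
  set δ : ℝ := min (1 / 2) (η / (2 * T + 2)) with hδ
  have hδ0 : 0 < δ := by positivity
  have hδ1 : δ ≤ 1 / 2 := min_le_left _ _
  have hδ2 : δ * (2 * T + 2) ≤ η := by
    rw [← le_div_iff₀ (by positivity)]; exact min_le_right _ _
  refine ⟨T, δ, hT0, hδ0, fun a => ?_⟩
  have hE : MeasurableSet {v : ℝ | |v| ≤ T ∧ ∀ j, δ * (1 + ‖a j‖) ≤ ‖(v : ℂ) - a j‖} := by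
    refine MeasurableSet.inter (s₁ := {v : ℝ | |v| ≤ T})
        (s₂ := {v : ℝ | ∀ j, δ * (1 + ‖a j‖) ≤ ‖(v : ℂ) - a j‖}) ?_ ?_
    · exact measurableSet_le (by fun_prop) measurable_const
    · rw [Set.setOf_forall]; exact MeasurableSet.iInter fun j => measurableSet_le measurable_const (dec_meas _)
  have htail : μ {v : ℝ | T ≤ |v|} ≤ ENNReal.ofReal (1 / 4) := by
    have hms : MeasurableSet {v : ℝ | T ≤ |v|} := measurableSet_le measurable_const (by fun_prop)
    have h1 : ENNReal.ofReal (T ^ q) * μ {v : ℝ | T ≤ |v|} ≤ ENNReal.ofReal M := by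
      rw [← lintegral_indicator_const hms]
      refine (lintegral_mono ?_).trans hMM
      intro v
      by_cases hv : T ≤ |v|
      · rw [Set.indicator_of_mem (by exact hv)]
        exact ENNReal.ofReal_le_ofReal (Real.rpow_le_rpow hT0.le (by linarith) hq.le)
      · rw [Set.indicator_of_notMem (by exact hv)]
        exact zero_le
    have h2 : (1 / 4 : ℝ) = M / T ^ q := by rw [hTq]; field_simp
    rw [h2, ENNReal.ofReal_div_of_pos (by positivity)]
    rw [ENNReal.le_div_iff_mul_le (Or.inl (by simp; positivity)) (Or.inl ENNReal.ofReal_ne_top), mul_comm]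
    exact h1
  have hcompl : μ {v : ℝ | |v| ≤ T ∧ ∀ j, δ * (1 + ‖a j‖) ≤ ‖(v : ℂ) - a j‖}ᶜ ≤
      ENNReal.ofReal (1 / 2) := by
    have hsub : {v : ℝ | |v| ≤ T ∧ ∀ j, δ * (1 + ‖a j‖) ≤ ‖(v : ℂ) - a j‖}ᶜ ⊆
        {v : ℝ | T ≤ |v|} ∪ ⋃ j, {v : ℝ | ‖(v : ℂ) - a j‖ ≤ η} := by
      intro v hv
      by_cases hvT : T ≤ |v|
      · exact Or.inl hvT
      · right
        have hvT' : |v| ≤ T := (not_le.1 hvT).le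
        have : ∃ j, ‖(v : ℂ) - a j‖ < δ * (1 + ‖a j‖) := by
          by_contra hcon
          push Not at hcon
          exact hv ⟨hvT', hcon⟩
        obtain ⟨j, hj⟩ := this
        refine Set.mem_iUnion.2 ⟨j, ?_⟩
        have htri : ‖a j‖ ≤ ‖(v : ℂ) - a j‖ + |v| := by
          have := norm_sub_le (v : ℂ) ((v : ℂ) - a j)
          simp at this
          linarith
        have hn := norm_nonneg (a j)
        have h3 : 1 + ‖a j‖ ≤ 2 * T + 2 := by nlinarith
        show ‖(v : ℂ) - a j‖ ≤ η
        nlinarith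
    refine (measure_mono hsub).trans ((measure_union_le _ _).trans ?_)
    have hU : μ (⋃ j, {v : ℝ | ‖(v : ℂ) - a j‖ ≤ η}) ≤ ENNReal.ofReal (1 / 4) := by
      refine (measure_iUnion_fintype_le μ _).trans ?_
      calc ∑ j, μ {v : ℝ | ‖(v : ℂ) - a j‖ ≤ η}
          ≤ ∑ _j : Fin l, ENNReal.ofReal (1 / (4 * (l + 1))) :=
            Finset.sum_le_sum fun j _ => (dec_ball μ α C₀ hreg _ η hη0).trans
              (ENNReal.ofReal_le_ofReal hηα)
        _ = ENNReal.ofReal (∑ _j : Fin l, 1 / (4 * (l + 1))) :=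
            (ENNReal.ofReal_sum_of_nonneg (fun _ _ => by positivity)).symm
        _ ≤ _ := by
            apply ENNReal.ofReal_le_ofReal
            simp only [Finset.sum_const, Finset.card_univ, Fintype.card_fin, nsmul_eq_mul]
            rw [mul_one_div, div_le_div_iff₀ (by positivity) (by positivity)]
            linarith
    refine (add_le_add htail hU).trans ?_
    rw [← ENNReal.ofReal_add (by norm_num) (by norm_num)]
    norm_num
  have hsum := measure_add_measure_compl (μ := μ) hE
  rw [measure_univ] at hsum
  have h5 : (1 : ℝ≥0∞) = ENNReal.ofReal (1 / 2) + ENNReal.ofReal (1 / 2) := by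
    rw [← ENNReal.ofReal_add (by norm_num) (by norm_num)]; norm_num
  have h6 : ENNReal.ofReal (1 / 2) + ENNReal.ofReal (1 / 2) ≤
      μ {v : ℝ | |v| ≤ T ∧ ∀ j, δ * (1 + ‖a j‖) ≤ ‖(v : ℂ) - a j‖} + ENNReal.ofReal (1 / 2) := by
    rw [← h5, ← hsum]; gcongr
  exact (ENNReal.add_le_add_iff_right ENNReal.ofReal_ne_top).1 h6

/-- Lemma 2.1, decoupling lemma: two-sided bound for integrals of rational
expressions against an α-regular measure with finite q-moment. -/
theorem decoupling_lemma
    (μ : Measure ℝ) [IsProbabilityMeasure μ]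
    (α : ℝ) (hα : 0 < α)
    (C₀ : ℝ) (hC₀ : 0 ≤ C₀)
    (hreg : ∀ t ε : ℝ, 0 < ε → μ (Set.Icc (t - ε) (t + ε)) ≤ ENNReal.ofReal (C₀ * ε ^ α))
    (q : ℝ) (hq : 0 < q)
    (hM : ∫⁻ t : ℝ, ENNReal.ofReal (|t| ^ q) ∂μ < ⊤)
    (l m : ℕ) (s r : ℝ) (hs : 0 < s) (hr : 0 < r)
    (hrm : r * m < α)
    (hqc : (s * l + r * m) * α / (α - r * m) ≤ q) :
    ∃ C C' : ℝ, 0 < C ∧ 0 < C' ∧ ∀ (a : Fin l → ℂ) (b : Fin m → ℂ),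
      (∫⁻ v : ℝ, (∏ j, (‖(v : ℂ) - a j‖₊ : ℝ≥0∞) ^ s)
            * ∏ i, (‖(v : ℂ) - b i‖₊ : ℝ≥0∞) ^ (-r) ∂μ)
        ≤ ENNReal.ofReal C
            * ((∏ j, ENNReal.ofReal ((1 + ‖a j‖) ^ s))
                * ∏ i, ENNReal.ofReal ((1 + ‖b i‖) ^ (-r)))
      ∧ ((∏ j, ENNReal.ofReal ((1 + ‖a j‖) ^ s))
            * ∏ i, ENNReal.ofReal ((1 + ‖b i‖) ^ (-r)))
        ≤ ENNReal.ofReal C'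
            * ∫⁻ v : ℝ, (∏ j, (‖(v : ℂ) - a j‖₊ : ℝ≥0∞) ^ s)
                * ∏ i, (‖(v : ℂ) - b i‖₊ : ℝ≥0∞) ^ (-r) ∂μ := by
  obtain ⟨K, hK, hkey⟩ := dec_key μ α hα C₀ hC₀ hreg q hq hM (r * m) (by positivity) hrm
    (s * l + r * m) (by positivity) hqc
  obtain ⟨T, δ, hT, hδ, hgood⟩ := dec_good μ α hα C₀ hC₀ hreg q hq hM l
  set c : ℝ := (δ ^ s) ^ l * ((1 + T) ^ (-r)) ^ m with hc
  have hc0 : 0 < c := by positivity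
  refine ⟨(2 ^ r) ^ m * ((1 + m) * K), 2 / c, by positivity, by positivity, fun a b => ?_⟩
  have hb : ∀ᵐ v : ℝ ∂μ, ∀ i, 0 < ‖(v : ℂ) - b i‖ :=
    ae_all_iff.2 fun i => dec_ne μ α hα C₀ hreg (b i)
  have hI : ∫⁻ v : ℝ, (∏ j, (‖(v : ℂ) - a j‖₊ : ℝ≥0∞) ^ s)
            * ∏ i, (‖(v : ℂ) - b i‖₊ : ℝ≥0∞) ^ (-r) ∂μ =
      ∫⁻ v : ℝ, ENNReal.ofReal
        ((∏ j, ‖(v : ℂ) - a j‖ ^ s) * ∏ i, ‖(v : ℂ) - b i‖ ^ (-r)) ∂μ :=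
    lintegral_congr_ae (hb.mono fun v hv => dec_conv s r a b hs v hv)
  rw [hI, dec_convR]
  set R : ℝ := (∏ j, (1 + ‖a j‖) ^ s) * ∏ i, (1 + ‖b i‖) ^ (-r) with hR
  have hR0 : 0 ≤ R := by positivity
  constructor
  · set G : ℂ → ℝ → ℝ := fun z v =>
      (1 + |v|) ^ (s * l + r * m) * max 1 (‖(v : ℂ) - z‖ ^ (-(r * m))) with hG
    have hG0 : ∀ z v, 0 ≤ G z v := fun z v => by simp only [hG]; positivity
    have hGm : ∀ z, Measurable (fun v => ENNReal.ofReal (G z v)) := fun z => by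
      simp only [hG]; fun_prop
    calc _ ≤ ∫⁻ v : ℝ, ENNReal.ofReal ((2 ^ r) ^ m * R) *
          (ENNReal.ofReal (G 0 v) + ∑ i, ENNReal.ofReal (G (b i) v)) ∂μ := by
          refine lintegral_mono_ae (hb.mono fun v hv => ?_)
          refine (ENNReal.ofReal_le_ofReal (dec_pt_upper s r hs hr a b v hv)).trans ?_
          rw [ENNReal.ofReal_mul (by positivity),
            ENNReal.ofReal_add (hG0 0 v) (Finset.sum_nonneg fun i _ => hG0 (b i) v),
            ENNReal.ofReal_sum_of_nonneg (fun i _ => hG0 (b i) v)]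
      _ = ENNReal.ofReal ((2 ^ r) ^ m * R) * (∫⁻ v, ENNReal.ofReal (G 0 v) ∂μ +
            ∑ i, ∫⁻ v, ENNReal.ofReal (G (b i) v) ∂μ) := by
          rw [lintegral_const_mul' _ _ ENNReal.ofReal_ne_top, lintegral_add_left (hGm 0),
            lintegral_finsetSum _ (fun i _ => hGm (b i))]
      _ ≤ ENNReal.ofReal ((2 ^ r) ^ m * R) * (ENNReal.ofReal K +
            ∑ _i : Fin m, ENNReal.ofReal K) := by
          gcongr with i _
          · exact hkey 0
          · exact hkey (b i)
      _ = _ := by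
          rw [← ENNReal.ofReal_sum_of_nonneg (fun _ _ => hK.le),
            ← ENNReal.ofReal_add hK.le (by positivity), ← ENNReal.ofReal_mul (by positivity),
            ← ENNReal.ofReal_mul (by positivity)]
          congr 1
          simp only [Finset.sum_const, Finset.card_univ, Fintype.card_fin, nsmul_eq_mul]
          ring
  · set E : Set ℝ := {v : ℝ | |v| ≤ T ∧ ∀ j, δ * (1 + ‖a j‖) ≤ ‖(v : ℂ) - a j‖} with hE
    have hEm : MeasurableSet E := by
      refine MeasurableSet.inter (s₁ := {v : ℝ | |v| ≤ T})
        (s₂ := {v : ℝ | ∀ j, δ * (1 + ‖a j‖) ≤ ‖(v : ℂ) - a j‖}) ?_ ?_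
      · exact measurableSet_le (by fun_prop) measurable_const
      · rw [Set.setOf_forall]; exact MeasurableSet.iInter fun j => measurableSet_le measurable_const (dec_meas _)
    have h1 : ENNReal.ofReal (c * R) * ENNReal.ofReal (1 / 2) ≤ ∫⁻ v : ℝ, ENNReal.ofReal
        ((∏ j, ‖(v : ℂ) - a j‖ ^ s) * ∏ i, ‖(v : ℂ) - b i‖ ^ (-r)) ∂μ := by
      calc _ ≤ ENNReal.ofReal (c * R) * μ E := by gcongr; exact hgood a
        _ = ∫⁻ v, E.indicator (fun _ => ENNReal.ofReal (c * R)) v ∂μ :=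
            (lintegral_indicator_const hEm _).symm
        _ ≤ _ := by
            refine lintegral_mono_ae (hb.mono fun v hv => ?_)
            by_cases hvE : v ∈ E
            · rw [Set.indicator_of_mem hvE]
              exact ENNReal.ofReal_le_ofReal
                (dec_pt_lower s r hs hr a b v T δ hδ hv hvE.1 hvE.2)
            · rw [Set.indicator_of_notMem hvE]
              exact zero_le
    calc ENNReal.ofReal R = ENNReal.ofReal (2 / c) *
          (ENNReal.ofReal (c * R) * ENNReal.ofReal (1 / 2)) := by
          rw [← ENNReal.ofReal_mul (by positivity), ← ENNReal.ofReal_mul (by positivity)]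
          congr 1
          field_simp
      _ ≤ _ := by gcongr

end
end

section
/- (Wegner-type single-site and two-site estimates.) Let μ be a probability measure on ℝ which is α-regular for some α > 0 (there is C₀ ≥ 0 with μ([t−ε,t+ε]) ≤ C₀ε^α for all t, ε > 0), and let 0 < s < α. Then there exists C_s < ∞, depending only on μ and s, such that for every countable set T, every bounded self-adjoint operator A₀ on ℓ²(T), every z ∈ ℂ ∖ ℝ, and all distinct x, y ∈ T: (1) ∫ |⟨δ_x, (A₀ + v P_x − z)^{−1} δ_x⟩|^s dμ(v) ≤ C_s, and (2) ∫∫ |⟨δ_x, (A₀ + u P_x + v P_y − z)^{−1} δ_y⟩|^s dμ(u) dμ(v) ≤ C_s, where P_x denotes the orthogonal projection onto the span of δ_x. -/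
open MeasureTheory
open scoped ENNReal NNReal Classical
noncomputable section

abbrev l2T (T : Type*) := lp (fun _ : T => ℂ) 2

/-- Green function on ℓ² of an arbitrary index set. -/
def GrnT {T : Type*} (z : ℂ) (A : l2T T →L[ℂ] l2T T) (x y : T) : ℂ :=
  Ring.inverse (A - z • 1) (lp.single 2 y 1) x

def Kf (s t : ℝ) : ℝ≥0∞ := (ENNReal.ofReal |t|)⁻¹ ^ s

lemma Kf_meas (s : ℝ) : Measurable (Kf s) := by
  unfold Kf; fun_prop

lemma Kf_le {s : ℝ} (hs : 0 < s) (t : ℝ) : Kf s t ≤ 1 + ∑' n : ℕ,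
    (Set.Icc (-(1/2:ℝ)^n) ((1/2:ℝ)^n)).indicator
      (fun _ => ENNReal.ofReal (2 ^ (((n:ℝ)+1) * s))) t := by
  rcases eq_or_ne t 0 with rfl | ht
  · refine le_trans le_top ?_
    have : ∑' n : ℕ, (Set.Icc (-(1/2:ℝ)^n) ((1/2:ℝ)^n)).indicator
      (fun _ => ENNReal.ofReal (2 ^ (((n:ℝ)+1) * s))) (0:ℝ) = ⊤ := by
      rw [eq_top_iff, ← ENNReal.tsum_const_eq_top_of_ne_zero (α := ℕ) (c := 1) one_ne_zero]
      refine ENNReal.tsum_le_tsum fun n => ?_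
      rw [Set.indicator_of_mem]
      · rw [ENNReal.one_le_ofReal]
        exact Real.one_le_rpow (by norm_num) (by positivity)
      · constructor
        · have : (0:ℝ) < (1/2)^n := by positivity
          linarith
        · positivity
    rw [this]; simp
  · have hp : 0 < |t| := abs_pos.mpr ht
    rcases le_or_gt 1 |t| with h1 | h1
    · refine le_trans ?_ le_self_add
      unfold Kf
      refine ENNReal.rpow_le_one ?_ hs.le
      rw [ENNReal.inv_le_one, ENNReal.one_le_ofReal]; exact h1
    · obtain ⟨n, hn1, hn2⟩ := exists_nat_pow_near_of_lt_one hp h1.le (by norm_num : (0:ℝ) < 1/2) (by norm_num)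
      refine le_trans ?_ le_add_self
      refine le_trans ?_ (ENNReal.le_tsum n)
      rw [Set.indicator_of_mem]
      · unfold Kf
        rw [← ENNReal.ofReal_inv_of_pos hp, ENNReal.ofReal_rpow_of_pos (inv_pos.mpr hp)]
        apply ENNReal.ofReal_le_ofReal
        rw [Real.rpow_mul (by norm_num)]
        apply Real.rpow_le_rpow (by positivity) _ hs.le
        have : (2:ℝ)^((n:ℝ)+1) = ((1/2:ℝ)^(n+1))⁻¹ := by
          rw [← Nat.cast_succ, Real.rpow_natCast]; simp
        rw [this]
        exact inv_anti₀ (by positivity) hn1.le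
      · exact abs_le.mp hn2

lemma Kf_int (μ : Measure ℝ) [IsProbabilityMeasure μ]
    (α : ℝ) (C₀ : ℝ) 
    (hreg : ∀ t ε : ℝ, 0 < ε → μ (Set.Icc (t - ε) (t + ε)) ≤ ENNReal.ofReal (C₀ * ε ^ α))
    (s : ℝ) (hs0 : 0 < s) (hsα : s < α) :
    ∃ C : ℝ≥0∞, C ≠ ⊤ ∧ ∀ t, ∫⁻ v, Kf s (v - t) ∂μ ≤ C := by
  refine ⟨1 + ∑' n : ℕ, ENNReal.ofReal (2 ^ (((n:ℝ)+1) * s) * (C₀ * ((1/2:ℝ)^n) ^ α)), ?_, ?_⟩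
  · refine ENNReal.add_ne_top.mpr ⟨by simp, ?_⟩
    apply Summable.tsum_ofReal_ne_top
    have : (fun n : ℕ => (2:ℝ) ^ (((n:ℝ)+1) * s) * (C₀ * ((1/2:ℝ)^n) ^ α))
        = fun n : ℕ => (2 ^ s * C₀) * ((2:ℝ) ^ (s - α)) ^ n := by
      ext n
      have e1 : ((1/2:ℝ)^n) ^ α = 2 ^ (-(n * α)) := by
        rw [one_div, inv_pow, ← Real.rpow_natCast, ← Real.rpow_neg (by norm_num),
          ← Real.rpow_mul (by norm_num)]; ring_nf
      rw [e1, ← Real.rpow_mul_natCast (by norm_num)]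
      have e2 : (2:ℝ) ^ (((n:ℝ)+1) * s) * 2 ^ (-(n * α)) = 2 ^ s * 2 ^ ((s - α) * n) := by
        rw [← Real.rpow_add (by norm_num), ← Real.rpow_add (by norm_num)]; ring_nf
      linear_combination C₀ * e2
    rw [this]
    apply Summable.mul_left
    exact summable_geometric_of_lt_one (by positivity)
      (Real.rpow_lt_one_of_one_lt_of_neg (by norm_num) (by linarith))
  · intro t
    have hm : ∀ n : ℕ, Measurable (fun v : ℝ => (Set.Icc (-(1/2:ℝ)^n) ((1/2:ℝ)^n)).indicator
      (fun _ => ENNReal.ofReal (2 ^ (((n:ℝ)+1) * s))) (v - t)) := fun n =>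
      (measurable_const.indicator measurableSet_Icc).comp (measurable_id.sub_const t)
    refine le_trans (lintegral_mono fun v => Kf_le hs0 (v - t)) ?_
    rw [lintegral_add_left measurable_const, lintegral_tsum fun n => (hm n).aemeasurable]
    refine add_le_add (by simp) (ENNReal.tsum_le_tsum fun n => ?_)
    have : (fun v : ℝ => (Set.Icc (-(1/2:ℝ)^n) ((1/2:ℝ)^n)).indicator
      (fun _ => ENNReal.ofReal (2 ^ (((n:ℝ)+1) * s))) (v - t)) =
      (Set.Icc (t - (1/2:ℝ)^n) (t + (1/2:ℝ)^n)).indicator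
      (fun _ => ENNReal.ofReal (2 ^ (((n:ℝ)+1) * s))) := by
      ext v
      simp only [Set.indicator, Set.mem_Icc]
      congr 1
      apply propext
      constructor <;> rintro ⟨h1, h2⟩ <;> constructor <;> linarith
    rw [this, lintegral_indicator_const measurableSet_Icc, ENNReal.ofReal_mul (by positivity)]
    gcongr
    exact hreg t _ (by positivity)

lemma Kf_bound {s : ℝ} (hs : 0 < s) {m t : ℝ} {w : ℂ} (hm : 0 < m) (h : ‖w‖ * |t| ≤ m) :
    (‖w‖₊ : ℝ≥0∞) ^ s ≤ ENNReal.ofReal (m ^ s) * Kf s t := by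
  unfold Kf
  rw [← ENNReal.ofReal_rpow_of_pos hm, ← ENNReal.mul_rpow_of_nonneg _ _ hs.le]
  apply ENNReal.rpow_le_rpow _ hs.le
  rcases eq_or_ne t 0 with rfl | ht
  · simp [hm]
  · have hp : 0 < |t| := abs_pos.mpr ht
    rw [← ENNReal.ofReal_inv_of_pos hp, ← ENNReal.ofReal_mul hm.le, ← enorm_eq_nnnorm, ← ofReal_norm]
    apply ENNReal.ofReal_le_ofReal
    rwa [← div_eq_mul_inv, le_div_iff₀ hp]

lemma two_int (μ : Measure ℝ) [IsProbabilityMeasure μ] (s : ℝ) (C : ℝ≥0∞)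
    (hC : ∀ t, ∫⁻ v, Kf s (v - t) ∂μ ≤ C) (t1 t2 : ℝ → ℝ) (t3 : ℝ) (h1 : Measurable t1)
    (h2 : Measurable t2) (c : ℝ≥0∞) (hc : c ≠ ⊤) :
    ∫⁻ u, ∫⁻ v, c * (Kf s (v - t1 u) + Kf s (u - t2 v) + Kf s (u - t3)) ∂μ ∂μ ≤ c * (C + C + C) := by
  have m1 : Measurable (fun p : ℝ × ℝ => Kf s (p.2 - t1 p.1)) :=
    (Kf_meas s).comp (measurable_snd.sub (h1.comp measurable_fst))
  have m2 : Measurable (fun p : ℝ × ℝ => Kf s (p.1 - t2 p.2)) :=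
    (Kf_meas s).comp (measurable_fst.sub (h2.comp measurable_snd))
  have m3 : Measurable (fun u : ℝ => Kf s (u - t3)) :=
    (Kf_meas s).comp (measurable_id.sub_const t3)
  have e : ∀ u, ∫⁻ v, c * (Kf s (v - t1 u) + Kf s (u - t2 v) + Kf s (u - t3)) ∂μ =
      c * (∫⁻ v, Kf s (v - t1 u) ∂μ + ∫⁻ v, Kf s (u - t2 v) ∂μ + Kf s (u - t3)) := by
    intro u
    have m1' : Measurable fun v => Kf s (v - t1 u) :=
      (Kf_meas s).comp (measurable_id.sub_const (t1 u))
    rw [lintegral_const_mul' _ _ hc, lintegral_add_right _ measurable_const,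
      lintegral_add_left m1']
    simp
  simp_rw [e]
  rw [lintegral_const_mul' _ _ hc, lintegral_add_right _ m3, lintegral_add_left m1.lintegral_prod_right']
  gcongr
  · refine le_trans (lintegral_mono fun u => hC (t1 u)) (by simp)
  · rw [lintegral_lintegral_swap m2.aemeasurable]
    refine le_trans (lintegral_mono fun u => hC (t2 u)) (by simp)
  · exact hC t3

/-- pointwise bound -/
lemma pointwise {s : ℝ} (hs : 0 < s) (a b c d : ℂ) (hb : b ≠ 0)
    (h : ‖b - star c‖ ^ 2 ≤ 4 * (a.im * d.im)) :
    ∃ (t1 t2 : ℝ → ℝ) (t3 : ℝ), Measurable t1 ∧ Measurable t2 ∧ ∀ (u v : ℝ) (w : ℂ),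
      ‖w‖ * ‖((u:ℂ) + a) * (v + d) - b * c‖ ≤ ‖b‖ →
      (‖w‖₊ : ℝ≥0∞) ^ s ≤ ENNReal.ofReal ((4:ℝ) ^ s) *
        (Kf s (v - t1 u) + Kf s (u - t2 v) + Kf s (u - t3)) := by
  have key : ∀ (w : ℂ) (x y z : ℝ), (‖w‖ * |x| ≤ 4 ∨ ‖w‖ * |y| ≤ 4 ∨ ‖w‖ * |z| ≤ 4) →
      (‖w‖₊ : ℝ≥0∞) ^ s ≤ ENNReal.ofReal ((4:ℝ) ^ s) * (Kf s x + Kf s y + Kf s z) := by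
    rintro w x y z (h | h | h)
    · refine (Kf_bound hs (by norm_num) h).trans ?_
      gcongr; rw [add_assoc]; exact le_self_add
    · refine (Kf_bound hs (by norm_num) h).trans ?_
      gcongr; rw [add_assoc]; exact le_trans le_self_add le_add_self
    · refine (Kf_bound hs (by norm_num) h).trans ?_
      gcongr; exact le_add_self
  have hb0 : 0 < ‖b‖ := norm_pos_iff.mpr hb
  have hbn : ‖b‖ ^ 2 = b.re ^ 2 + b.im ^ 2 := by rw [Complex.sq_norm, Complex.normSq_apply]; ring
  have hn : ‖b - star c‖ ^ 2 = (b.re - c.re) ^ 2 + (b.im + c.im) ^ 2 := by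
    rw [Complex.sq_norm, Complex.normSq_apply]; simp; ring
  rw [hn] at h
  rcases le_total (‖b‖ ^ 2) ((b.re + c.re) ^ 2 + (b.im - c.im) ^ 2) with hA | hA
  · -- self-adjoint part dominates
    set r2 : ℝ := a.im * d.im + b.re * c.re - b.im * c.im with hr2
    have hr4 : ‖b‖ ^ 2 ≤ 4 * r2 := by rw [hr2]; nlinarith
    have hr0 : 0 < r2 := by nlinarith [pow_pos hb0 2]
    set r := Real.sqrt r2 with hr
    have hrp : 0 < r := Real.sqrt_pos.mpr hr0
    have hrr : r ^ 2 = r2 := Real.sq_sqrt hr0.le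
    have hbr : ‖b‖ ≤ 2 * r := by
      apply le_of_sq_le_sq _ (by positivity); rw [mul_pow, hrr]; linarith
    refine ⟨fun u => r2 / (u + a.re) - d.re, fun v => r2 / (v + d.re) - a.re, - a.re,
      by fun_prop, by fun_prop, ?_⟩
    intro u v w hw
    apply key
    have hre : |(u + a.re) * (v + d.re) - r2| ≤ ‖((u:ℂ) + a) * (v + d) - b * c‖ := by
      refine le_trans (le_of_eq ?_) (Complex.abs_re_le_norm _)
      congr 1; simp [hr2]; ring
    have hw2 : ‖w‖ * |(u + a.re) * (v + d.re) - r2| ≤ 2 * r :=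
      (mul_le_mul_of_nonneg_left hre (norm_nonneg w)).trans (hw.trans hbr)
    set U := u + a.re
    set V := v + d.re
    have aux : ∀ X Y : ℝ, r / 2 ≤ |X| → ‖w‖ * |X * Y - r2| ≤ 2 * r → ‖w‖ * |Y - r2 / X| ≤ 4 := by
      intro X Y hX hXY
      have hX0 : 0 < |X| := by linarith
      have hX1 : X ≠ 0 := abs_pos.mp hX0
      have : |X * Y - r2| = |X| * |Y - r2 / X| := by
        rw [← abs_mul]; congr 1; field_simp
      rw [this] at hXY
      have hq : 0 ≤ ‖w‖ * |Y - r2 / X| := by positivity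
      have : (r/2) * (‖w‖ * |Y - r2 / X|) ≤ (r/2) * 4 := by nlinarith
      exact le_of_mul_le_mul_left this (by positivity)
    rcases le_or_gt (r/2) |U| with hU | hU
    · left
      convert aux U V hU hw2 using 3
      simp only [U, V]; ring
    rcases le_or_gt (r/2) |V| with hV | hV
    · right; left
      convert aux V U hV (by rwa [mul_comm V U]) using 3
      simp only [U, V]; ring
    right; right
    have hUV : |U * V| ≤ r / 2 * (r / 2) := by
      rw [abs_mul]; exact mul_le_mul hU.le hV.le (abs_nonneg _) (by positivity)
    have hd : 3/4 * r ^ 2 ≤ |U * V - r2| := by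
      rw [abs_sub_comm]
      refine le_trans ?_ (le_abs_self _)
      rw [← hrr]; nlinarith [le_abs_self (U * V)]
    have : ‖w‖ * (3/4 * r ^ 2) ≤ 2 * r := (mul_le_mul_of_nonneg_left hd (norm_nonneg w)).trans hw2
    have h3 : ‖w‖ * r ≤ 8/3 := by
      have : r * (‖w‖ * r) ≤ r * (8/3) := by nlinarith
      exact le_of_mul_le_mul_left this hrp
    have e : u - -a.re = U := by simp only [U]; ring
    rw [e]
    nlinarith [norm_nonneg w]
  · -- dissipative part dominates
    have hpq : ‖b‖ ^ 2 ≤ 4 * (a.im * d.im) := by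
      nlinarith [sq_nonneg c.re, sq_nonneg c.im]
    set k := a.re * d.im + a.im * d.re - (b.re * c.im + b.im * c.re) with hk
    have him : ∀ u v : ℝ, |d.im * u + a.im * v + k| ≤ ‖((u:ℂ) + a) * (v + d) - b * c‖ := by
      intro u v
      refine le_trans (le_of_eq ?_) (Complex.abs_im_le_norm _)
      congr 1; simp [hk]; ring
    have aux : ∀ p q : ℝ, |q| ≤ |p| → ‖b‖ ^ 2 ≤ 4 * (p * q) → p ≠ 0 ∧ ‖b‖ ≤ 2 * |p| := by
      intro p q h1 h2
      have : p * q ≤ |p| * |p| := by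
        refine (le_abs_self _).trans ?_
        rw [abs_mul]; exact mul_le_mul_of_nonneg_left h1 (abs_nonneg _)
      have h3 : ‖b‖ ≤ 2 * |p| := by
        apply le_of_sq_le_sq _ (by positivity); nlinarith
      exact ⟨abs_pos.mp (by linarith), h3⟩
    have aux2 : ∀ (w : ℂ) (p X : ℝ), p ≠ 0 → ‖b‖ ≤ 2 * |p| → ‖w‖ * |p * X| ≤ ‖b‖ → ‖w‖ * |X| ≤ 4 := by
      intro w p X hp h1 h2
      have hp0 := abs_pos.mpr hp
      rw [abs_mul] at h2
      have : |p| * (‖w‖ * |X|) ≤ |p| * 4 := by nlinarith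
      exact le_of_mul_le_mul_left this hp0
    refine ⟨fun u => -(d.im * u + k) / a.im, fun v => -(a.im * v + k) / d.im, 0, by fun_prop, by fun_prop, ?_⟩
    intro u v w hw
    apply key
    have hw2 := (mul_le_mul_of_nonneg_left (him u v) (norm_nonneg w)).trans hw
    rcases le_total |d.im| |a.im| with hle | hle
    · left
      obtain ⟨h1, h2⟩ := aux a.im d.im hle hpq
      refine aux2 w a.im _ h1 h2 ?_
      have e : a.im * (v - -(d.im * u + k) / a.im) = d.im * u + a.im * v + k := by
        field_simp; ring
      rw [e]; exact hw2
    · right; left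
      obtain ⟨h1, h2⟩ := aux d.im a.im hle (by rwa [mul_comm d.im])
      refine aux2 w d.im _ h1 h2 ?_
      have e : d.im * (u - -(a.im * v + k) / d.im) = d.im * u + a.im * v + k := by
        field_simp; ring
      rw [e]; exact hw2

def ev {T : Type*} (x : T) : l2T T := lp.single 2 x (1:ℂ)

lemma add_c {T : Type*} (f g : l2T T) (x : T) : (f + g) x = f x + g x := rfl
lemma sub_c {T : Type*} (f g : l2T T) (x : T) : (f - g) x = f x - g x := rfl
lemma smul_c {T : Type*} (a : ℂ) (f : l2T T) (x : T) : (a • f) x = a * f x := rfl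
lemma zero_c {T : Type*} (x : T) : (0 : l2T T) x = 0 := rfl

lemma ev_self {T : Type*} (x : T) : ev x x = 1 := lp.single_apply_self _ _ _
lemma ev_ne {T : Type*} {x y : T} (h : y ≠ x) : ev x y = 0 := lp.single_apply_ne _ _ _ h
lemma single_ev {T : Type*} (x : T) (c : ℂ) : (lp.single 2 x c : l2T T) = c • ev x := by
  unfold ev; rw [← lp.single_smul]; simp
lemma inner_ev {T : Type*} (x : T) (f : l2T T) : inner ℂ f (ev x) = star (f x) := by
  unfold ev; rw [lp.inner_single_right]; simp [inner]

lemma res_unit {T : Type*} {A : l2T T →L[ℂ] l2T T} (hA : IsSelfAdjoint A) {z : ℂ} (hz : z.im ≠ 0) :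
    IsUnit (A - z • 1) := by
  by_contra h
  apply hz
  apply hA.im_eq_zero_of_mem_spectrum
  rw [spectrum.mem_iff, ← IsUnit.neg_iff, neg_sub, Algebra.algebraMap_eq_smul_one]
  exact h

lemma P_sa {T : Type*} {x : T} {P : l2T T →L[ℂ] l2T T} (h : ∀ ψ, P ψ = lp.single 2 x (ψ x)) (v : ℝ) :
    IsSelfAdjoint ((v:ℂ) • P) := by
  have : IsSelfAdjoint P := by
    rw [ContinuousLinearMap.isSelfAdjoint_iff_isSymmetric]
    intro f g
    simp only [ContinuousLinearMap.coe_coe, h]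
    rw [lp.inner_single_left, lp.inner_single_right]
  refine IsSelfAdjoint.smul ?_ this
  simp [isSelfAdjoint_iff]

/-- The resolvent equation. -/
lemma res_eq {T : Type*} {A : l2T T →L[ℂ] l2T T} (hA : IsSelfAdjoint A) {z : ℂ} (hz : z.im ≠ 0)
    (f : l2T T) : A (Ring.inverse (A - z • 1) f) - z • Ring.inverse (A - z • 1) f = f := by
  have := congrArg (fun B : l2T T →L[ℂ] l2T T => B f) (Ring.mul_inverse_cancel _ (res_unit hA hz))
  simpa using this

lemma form_sub {T : Type*} {A : l2T T →L[ℂ] l2T T} (hA : IsSelfAdjoint A) (z : ℂ) (f g : l2T T) :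
    inner ℂ f (A g - z • g) - star (inner ℂ g (A f - z • f)) = (star z - z) * inner ℂ f g := by
  have h := (ContinuousLinearMap.isSelfAdjoint_iff_isSymmetric.mp hA) f g
  simp only [ContinuousLinearMap.coe_coe] at h
  have e : star (inner ℂ g (A f - z • f)) = inner ℂ (A f - z • f) g := inner_conj_symm _ _
  rw [e, inner_sub_left, inner_sub_right, inner_smul_left, inner_smul_right, h]
  simp; ring

lemma eq_zero_of {T : Type*} {A : l2T T →L[ℂ] l2T T} (hA : IsSelfAdjoint A) {z : ℂ} (hz : z.im ≠ 0)
    (f : l2T T) (h : inner ℂ f (A f - z • f) = 0) : f = 0 := by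
  have := form_sub hA z f f
  rw [h] at this
  simp only [star_zero, sub_zero, zero_eq_mul] at this
  rcases this with h | h
  · exfalso; apply hz
    have := congrArg Complex.im h
    simp at this; linarith
  · exact inner_self_eq_zero.mp h

lemma one_site {T : Type*} {A : l2T T →L[ℂ] l2T T} (hA : IsSelfAdjoint A) {z : ℂ} (hz : z.im ≠ 0)
    {x : T} {P : l2T T →L[ℂ] l2T T} (hP : ∀ ψ, P ψ = lp.single 2 x (ψ x)) :
    ∃ t : ℝ, ∀ v : ℝ, ‖GrnT z (A + (v:ℂ) • P) x x‖ * |v - t| ≤ 1 := by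
  set w := Ring.inverse (A - z • 1) (ev x) with hw
  have hwe : A w - z • w = ev x := res_eq hA hz _
  refine ⟨-(1 / w x).re, fun v => ?_⟩
  have hφ := res_eq (hA.add (P_sa hP v)) hz (ev x)
  have hG : GrnT z (A + (v:ℂ) • P) x x = Ring.inverse (A + (v:ℂ) • P - z • 1) (ev x) x := rfl
  rw [hG]
  set φ := Ring.inverse (A + (v:ℂ) • P - z • 1) (ev x)
  simp only [add_apply, smul_apply, hP, single_ev] at hφ
  have h0 : φ - (1 - v * φ x) • w = 0 := by
    apply eq_zero_of hA hz
    have : A (φ - (1 - v * φ x) • w) - z • (φ - (1 - v * φ x) • w) = 0 := by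
      rw [map_sub, map_smul]
      linear_combination (norm := module) hφ - (1 - v * φ x) • hwe
    rw [this, inner_zero_right]
  have h1 : φ x - (1 - v * φ x) * w x = 0 := by
    have := congrArg (fun f : l2T T => f x) h0
    simpa only [sub_c, smul_c, zero_c] using this
  rcases eq_or_ne (w x) 0 with h | h
  · have : φ x = 0 := by simpa [h] using h1
    simp [this]
  · have h2 : φ x * (v + 1 / w x) = 1 := by
      field_simp
      linear_combination h1
    have h3 : |v - -(1 / w x).re| ≤ ‖(v:ℂ) + 1 / w x‖ := by
      refine le_trans (le_of_eq ?_) (Complex.abs_re_le_norm _)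
      simp
    refine (mul_le_mul_of_nonneg_left h3 (norm_nonneg _)).trans ?_
    rw [← norm_mul, h2]; simp

lemma exists_w {T : Type*} {A : l2T T →L[ℂ] l2T T} (hA : IsSelfAdjoint A) {z : ℂ} (hz : z.im ≠ 0)
    {x y : T} (hxy : x ≠ y) (η : ℂ × ℂ) :
    ∃ (ξ : ℂ × ℂ) (w : l2T T), w x = η.1 ∧ w y = η.2 ∧ A w - z • w = ξ.1 • ev x + ξ.2 • ev y := by
  set R := Ring.inverse (A - z • 1) with hR
  let L : (ℂ × ℂ) →ₗ[ℂ] (ℂ × ℂ) :=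
    { toFun := fun ξ => (R (ξ.1 • ev x + ξ.2 • ev y) x, R (ξ.1 • ev x + ξ.2 • ev y) y)
      map_add' := by
        intro a b
        simp only [map_add, map_smul, Prod.fst_add, Prod.snd_add, add_smul]
        ext <;> simp only [add_c, smul_c, Prod.fst_add, Prod.snd_add, Prod.smul_fst, Prod.smul_snd, smul_eq_mul, RingHom.id_apply] <;> ring
      map_smul' := by
        intro c a
        simp only [map_add, map_smul, Prod.smul_fst, Prod.smul_snd]
        ext <;> simp only [add_c, smul_c, Prod.fst_add, Prod.snd_add, Prod.smul_fst, Prod.smul_snd, smul_eq_mul, RingHom.id_apply] <;> ring }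
  have hinj : Function.Injective L := by
    rw [← LinearMap.ker_eq_bot, LinearMap.ker_eq_bot']
    intro ξ hξ
    have h1 : R (ξ.1 • ev x + ξ.2 • ev y) x = 0 := congrArg Prod.fst hξ
    have h2 : R (ξ.1 • ev x + ξ.2 • ev y) y = 0 := congrArg Prod.snd hξ
    have he := res_eq hA hz (ξ.1 • ev x + ξ.2 • ev y)
    rw [← hR] at he
    have h0 : R (ξ.1 • ev x + ξ.2 • ev y) = 0 := by
      apply eq_zero_of hA hz
      rw [he, inner_add_right, inner_smul_right, inner_smul_right, inner_ev, inner_ev, h1, h2]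
      simp
    rw [h0] at he
    simp only [map_zero, smul_zero, sub_zero] at he
    have hx := congrArg (fun f : l2T T => f x) he
    have hy := congrArg (fun f : l2T T => f y) he
    simp only [add_c, smul_c, zero_c, ev_self, ev_ne hxy, mul_one, mul_zero, add_zero] at hx
    simp only [add_c, smul_c, zero_c, ev_self, ev_ne hxy.symm, mul_one, mul_zero, zero_add] at hy
    exact Prod.ext hx.symm hy.symm
  obtain ⟨ξ, hξ⟩ := (LinearMap.injective_iff_surjective.mp hinj) η
  exact ⟨ξ, R (ξ.1 • ev x + ξ.2 • ev y), congrArg Prod.fst hξ, congrArg Prod.snd hξ, res_eq hA hz _⟩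

lemma two_site {T : Type*} {A : l2T T →L[ℂ] l2T T} (hA : IsSelfAdjoint A) {z : ℂ} (hz : z.im ≠ 0)
    {x y : T} (hxy : x ≠ y) {P Q : l2T T →L[ℂ] l2T T} (hP : ∀ ψ, P ψ = lp.single 2 x (ψ x))
    (hQ : ∀ ψ, Q ψ = lp.single 2 y (ψ y)) :
    ∃ a b c d : ℂ, a.im ≠ 0 ∧ ‖b - star c‖ ^ 2 ≤ 4 * (a.im * d.im) ∧ ∀ u v : ℝ,
      (u + a) * GrnT z (A + (u:ℂ) • P + (v:ℂ) • Q) x y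
        + b * (Ring.inverse (A + (u:ℂ) • P + (v:ℂ) • Q - z • 1) (ev y) y) = 0 ∧
      c * GrnT z (A + (u:ℂ) • P + (v:ℂ) • Q) x y
        + (v + d) * (Ring.inverse (A + (u:ℂ) • P + (v:ℂ) • Q - z • 1) (ev y) y) = 1 := by
  obtain ⟨⟨a, c⟩, w, hwx, hwy, hw⟩ := exists_w hA hz hxy (1, 0)
  obtain ⟨⟨b, d⟩, w', hwx', hwy', hw'⟩ := exists_w hA hz hxy (0, 1)
  simp only at hwx hwy hw hwx' hwy' hw'
  have faa := form_sub hA z w w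
  have fab := form_sub hA z w w'
  have fdd := form_sub hA z w' w'
  simp only [hw, hw', inner_add_right, inner_smul_right, inner_ev, hwx, hwy, hwx', hwy',
    star_one, star_zero, mul_one, mul_zero, add_zero, zero_add] at faa fab fdd
  rw [inner_self_eq_norm_sq_to_K] at faa fdd
  have ia : a.im = -z.im * ‖w‖ ^ 2 := by
    have := congrArg Complex.im faa
    simp [← Complex.ofReal_pow] at this
    linarith
  have id : d.im = -z.im * ‖w'‖ ^ 2 := by
    have := congrArg Complex.im fdd
    simp [← Complex.ofReal_pow] at this
    linarith
  have hw0 : w ≠ 0 := by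
    rintro rfl
    simp at hwx
  refine ⟨a, b, c, d, ?_, ?_, ?_⟩
  · rw [ia]
    exact mul_ne_zero (neg_ne_zero.mpr hz) (pow_ne_zero _ (norm_ne_zero_iff.mpr hw0))
  · rw [fab, ia, id, norm_mul, mul_pow]
    have h1 : ‖star z - z‖ ^ 2 = 4 * z.im ^ 2 := by
      rw [Complex.sq_norm, Complex.normSq_apply]; simp; ring
    have h2 : ‖(inner ℂ w w' : ℂ)‖ ^ 2 ≤ (‖w‖ * ‖w'‖) ^ 2 :=
      pow_le_pow_left₀ (norm_nonneg _) (norm_inner_le_norm w w') 2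
    rw [h1]
    nlinarith [mul_le_mul_of_nonneg_left h2 (sq_nonneg z.im)]
  · intro u v
    have hφ := res_eq ((hA.add (P_sa hP u)).add (P_sa hQ v)) hz (ev y)
    have hG : GrnT z (A + (u:ℂ) • P + (v:ℂ) • Q) x y =
      Ring.inverse (A + (u:ℂ) • P + (v:ℂ) • Q - z • 1) (ev y) x := rfl
    rw [hG]
    set φ := Ring.inverse (A + (u:ℂ) • P + (v:ℂ) • Q - z • 1) (ev y)
    simp only [add_apply, smul_apply, hP, hQ, single_ev] at hφ
    set ψ := φ - φ x • w - φ y • w' with hψ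
    have hψx : ψ x = 0 := by simp [hψ, sub_c, smul_c, hwx, hwx', -lp.coeFn_sub, -lp.coeFn_smul, -AddSubgroupClass.coe_sub]
    have hψy : ψ y = 0 := by simp [hψ, sub_c, smul_c, hwy, hwy', -lp.coeFn_sub, -lp.coeFn_smul, -AddSubgroupClass.coe_sub]
    have he : A ψ - z • ψ = (-((u + a) * φ x + b * φ y)) • ev x
        + (1 - (c * φ x + (v + d) * φ y)) • ev y := by
      rw [hψ, map_sub, map_sub, map_smul, map_smul]
      linear_combination (norm := module) hφ - φ x • hw - φ y • hw'
    have h0 : ψ = 0 := by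
      apply eq_zero_of hA hz
      rw [he, inner_add_right, inner_smul_right, inner_smul_right, inner_ev, inner_ev, hψx, hψy]
      simp
    rw [h0] at he
    simp only [map_zero, smul_zero, sub_zero] at he
    have hx := congrArg (fun f : l2T T => f x) he
    have hy := congrArg (fun f : l2T T => f y) he
    simp only [add_c, smul_c, zero_c, ev_self, ev_ne hxy, mul_one, mul_zero, add_zero] at hx
    simp only [add_c, smul_c, zero_c, ev_self, ev_ne hxy.symm, mul_one, mul_zero, zero_add] at hy
    constructor
    · linear_combination hx
    · linear_combination hy

/-- Lemma 2.2, Wegner-type single-site and two-site estimates. -/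
theorem wegner_single_and_two_site
    (μ : Measure ℝ) [IsProbabilityMeasure μ]
    (α : ℝ) (hα : 0 < α)
    (C₀ : ℝ) (hC₀ : 0 ≤ C₀)
    (hreg : ∀ t ε : ℝ, 0 < ε → μ (Set.Icc (t - ε) (t + ε)) ≤ ENNReal.ofReal (C₀ * ε ^ α))
    (s : ℝ) (hs0 : 0 < s) (hsα : s < α) :
    ∃ Cs : ℝ, 0 < Cs ∧
      ∀ (T : Type) (_ : Countable T)
        (A₀ : l2T T →L[ℂ] l2T T) (_ : IsSelfAdjoint A₀)
        (Px : T → (l2T T →L[ℂ] l2T T))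
        (_ : ∀ (x : T) (ψ : l2T T), Px x ψ = lp.single 2 x (ψ x))
        (z : ℂ) (_ : z.im ≠ 0) (x y : T) (_ : x ≠ y),
        (∫⁻ v : ℝ, (‖GrnT z (A₀ + (v : ℂ) • Px x) x x‖₊ : ℝ≥0∞) ^ s ∂μ
            ≤ ENNReal.ofReal Cs)
        ∧ (∫⁻ u : ℝ, ∫⁻ v : ℝ,
              (‖GrnT z (A₀ + (u : ℂ) • Px x + (v : ℂ) • Px y) x y‖₊ : ℝ≥0∞) ^ s ∂μ ∂μ
            ≤ ENNReal.ofReal Cs) := by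
  obtain ⟨C, hC, hK⟩ := Kf_int μ α C₀ hreg s hs0 hsα
  set D : ℝ≥0∞ := C + ENNReal.ofReal ((4:ℝ) ^ s) * (C + C + C) with hD
  have hDt : D ≠ ⊤ := by
    rw [hD]
    simp [ENNReal.add_eq_top, ENNReal.mul_eq_top, hC]
  have hDle : D ≤ ENNReal.ofReal (D.toReal + 1) := by
    conv_lhs => rw [← ENNReal.ofReal_toReal hDt]
    exact ENNReal.ofReal_le_ofReal (by linarith)
  refine ⟨D.toReal + 1, by positivity, ?_⟩
  intro T _ A₀ hA Px hPx z hz x y hxy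
  constructor
  · obtain ⟨t, ht⟩ := one_site hA hz (hPx x)
    refine le_trans ?_ hDle
    refine le_trans ((lintegral_mono fun v => ?_).trans (hK t)) le_self_add
    refine (Kf_bound hs0 one_pos (ht v)).trans ?_
    simp
  · obtain ⟨a, b, c, d, ha, hbc, heq⟩ := two_site hA hz hxy (hPx x) (hPx y)
    refine le_trans ?_ hDle
    refine le_trans ?_ le_add_self
    rcases eq_or_ne b 0 with rfl | hb
    · have h0 : ∀ u v : ℝ, GrnT z (A₀ + (u : ℂ) • Px x + (v : ℂ) • Px y) x y = 0 := by
        intro u v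
        have h1 := (heq u v).1
        rw [zero_mul, add_zero] at h1
        refine (mul_eq_zero.mp h1).resolve_left fun h => ha ?_
        have := congrArg Complex.im h
        simpa using this
      simp only [h0]
      simp [hs0]
    · obtain ⟨t1, t2, t3, m1, m2, hp⟩ := pointwise hs0 a b c d hb hbc
      refine le_trans (lintegral_mono fun u => lintegral_mono fun v => hp u v _ ?_)
        (two_int μ s C hK t1 t2 t3 m1 m2 _ ENNReal.ofReal_ne_top)
      rw [← norm_mul]
      obtain ⟨h1, h2⟩ := heq u v
      apply le_of_eq
      rw [← norm_neg b]
      congr 1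
      linear_combination (v + d) * h1 - b * h2

end
end
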